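/- Let Ω be an open subset of ℝⁿ and let f = (u₁, v₁) and g = (u₂, v₂) be H-continuous pairs on Ω. Then there exists a unique H-continuous pair (q_l, q_u) on Ω satisfying m(x) ≤ q_l(x) ≤ q_u(x) ≤ M(x) for all x ∈ Ω, where m(x) = min{u₁(x)u₂(x), u₁(x)v₂(x), v₁(x)u₂(x), v₁(x)v₂(x)} and M(x) = max of the same four numbers. -/

import Mathlib

open Set

/-- Points of `ℝⁿ`. -/
abbrev Pt (n : ℕ) := EuclideanSpace ℝ (Fin n)

/-- Lower Baire operator `I(D,Ω,f)(x) = sup_{δ>0} inf { f y : y ∈ B_δ(x) ∩ D }`,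
where `B_δ(x) = { y ∈ Ω : ‖y - x‖ < δ }`. -/
noncomputable def Ilow {n : ℕ} (D Om : Set (Pt n)) (f : Pt n → ℝ) (x : Pt n) : ℝ :=
  sSup {a : ℝ | ∃ δ : ℝ, 0 < δ ∧
    a = sInf (f '' {y | y ∈ Om ∧ ‖y - x‖ < δ ∧ y ∈ D})}

/-- Upper Baire operator `S(D,Ω,f)(x) = inf_{δ>0} sup { f y : y ∈ B_δ(x) ∩ D }`. -/
noncomputable def Shigh {n : ℕ} (D Om : Set (Pt n)) (f : Pt n → ℝ) (x : Pt n) : ℝ :=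
  sInf {a : ℝ | ∃ δ : ℝ, 0 < δ ∧
    a = sSup (f '' {y | y ∈ Om ∧ ‖y - x‖ < δ ∧ y ∈ D})}

/-- `f`, defined on `D ⊆ Ω`, is locally bounded relative to `Ω`. -/
def LocBddOn {n : ℕ} (Om D : Set (Pt n)) (f : Pt n → ℝ) : Prop :=
  ∀ x ∈ Om, ∃ δ : ℝ, 0 < δ ∧ ∃ M : ℝ,
    ∀ y, y ∈ Om → ‖y - x‖ < δ → y ∈ D → |f y| < M

/-- `(u, v)` encodes an interval-valued function `x ↦ [u x, v x]` on `Om`. -/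
def IntervalPair {n : ℕ} (Om : Set (Pt n)) (u v : Pt n → ℝ) : Prop :=
  LocBddOn Om Om u ∧ LocBddOn Om Om v ∧ ∀ x ∈ Om, u x ≤ v x

/-- The pair `(u, v)` is S-continuous on `Om`: `I(u) = u` and `S(v) = v`. -/
def SCont {n : ℕ} (Om : Set (Pt n)) (u v : Pt n → ℝ) : Prop :=
  ∀ x ∈ Om, Ilow Om Om u x = u x ∧ Shigh Om Om v x = v x

/-- The pair `(u, v)` is Hausdorff continuous on `Om`. -/
def HCont {n : ℕ} (Om : Set (Pt n)) (u v : Pt n → ℝ) : Prop :=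
  ∀ p q : Pt n → ℝ, LocBddOn Om Om p → LocBddOn Om Om q →
    (∀ x ∈ Om, u x ≤ p x ∧ p x ≤ q x ∧ q x ≤ v x) →
    ∀ x ∈ Om, Ilow Om Om p x = u x ∧ Shigh Om Om q x = v x

/-- `(u, v)` is an H-continuous interval pair on `Om`. -/
def HContPair {n : ℕ} (Om : Set (Pt n)) (u v : Pt n → ℝ) : Prop :=
  IntervalPair Om u v ∧ HCont Om u v

/-- Lower endpoint of the pointwise interval product. -/
noncomputable def imin {n : ℕ} (u₁ v₁ u₂ v₂ : Pt n → ℝ) (x : Pt n) : ℝ :=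
  min (min (u₁ x * u₂ x) (u₁ x * v₂ x)) (min (v₁ x * u₂ x) (v₁ x * v₂ x))

/-- Upper endpoint of the pointwise interval product. -/
noncomputable def imax {n : ℕ} (u₁ v₁ u₂ v₂ : Pt n → ℝ) (x : Pt n) : ℝ :=
  max (max (u₁ x * u₂ x) (u₁ x * v₂ x)) (max (v₁ x * u₂ x) (v₁ x * v₂ x))

/-- `(pl, pu)` is the H-continuous pair contained pointwise in the interval sum of
`(u₁, v₁)` and `(u₂, v₂)`, i.e. `(pl, pu) = (u₁,v₁) ⊕ (u₂,v₂)`. -/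
def IsOplus {n : ℕ} (Om : Set (Pt n)) (u₁ v₁ u₂ v₂ pl pu : Pt n → ℝ) : Prop :=
  HContPair Om pl pu ∧
    ∀ x ∈ Om, u₁ x + u₂ x ≤ pl x ∧ pl x ≤ pu x ∧ pu x ≤ v₁ x + v₂ x

/-- `(ql, qu)` is the H-continuous pair contained pointwise in the interval product of
`(u₁, v₁)` and `(u₂, v₂)`, i.e. `(ql, qu) = (u₁,v₁) ⊗ (u₂,v₂)`. -/
def IsOtimes {n : ℕ} (Om : Set (Pt n)) (u₁ v₁ u₂ v₂ ql qu : Pt n → ℝ) : Prop :=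
  HContPair Om ql qu ∧
    ∀ x ∈ Om, imin u₁ v₁ u₂ v₂ x ≤ ql x ∧ ql x ≤ qu x ∧ qu x ≤ imax u₁ v₁ u₂ v₂ x

/-!
Write `m` and `M` for the endpoints of the interval product. Semicontinuity of the endpoints of the
two factors makes `m` lower and `M` upper semicontinuous, so `(I(M), S(I(M)))` is an H-continuous
pair between `m` and `M`.

For uniqueness, near every point the upper endpoint `v` of an H-continuous pair is approximated by
values of the lower endpoint `u`, so `v - u` is arbitrarily small on open sets accumulating at every
point. Intersecting such open sets for the two factors shows that `M - m` is small arbitrarily close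
to every point, that is `I(M) ≤ S(m)`. An H-continuous pair `(u, v)` between `m` and `M` has
`u = I(v) ≤ I(M) ≤ S(m) ≤ S(u) = v`, which forces `u = I(M)` and `v = S(I(M))`.
-/

open Filter Topology Bornology

/-- Boundedness of `f` on every bounded subset of `Om`. This is stronger than local boundedness when
`Om` is not closed, and it is what the Baire operators need: they range over balls of all radii, and
`sInf` and `sSup` of an unbounded set of reals take the junk value `0`. -/
def BddOnBounded {n : ℕ} (Om : Set (Pt n)) (f : Pt n → ℝ) : Prop :=
  ∀ s ⊆ Om, IsBounded s → ∃ C, ∀ y ∈ s, |f y| ≤ C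

theorem frequently_frequently_nhdsWithin {X : Type*} [TopologicalSpace X] {s : Set X} {x : X}
    {p : X → Prop} : (∃ᶠ y in 𝓝[s] x, ∃ᶠ z in 𝓝[s] y, p z) ↔ ∃ᶠ y in 𝓝[s] x, p y := by
  simp only [Filter.Frequently, not_not, eventually_eventually_nhdsWithin]

theorem mul_le_max_of_mem_Icc {R : Type*} [Ring R] [LinearOrder R] [IsOrderedRing R]
    {a b c d s t : R} (hs : s ∈ Icc a b) (ht : t ∈ Icc c d) :
    s * t ≤ max (max (a * c) (a * d)) (max (b * c) (b * d)) := by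
  have mul_le (e : R) : e * t ≤ max (e * c) (e * d) := by
    rcases le_total 0 e with he | he
    · exact le_max_of_le_right (mul_le_mul_of_nonneg_left ht.2 he)
    · exact le_max_of_le_left (mul_le_mul_of_nonpos_left ht.1 he)
  rcases le_total 0 t with h | h
  · exact le_max_of_le_right ((mul_le_mul_of_nonneg_right hs.2 h).trans (mul_le b))
  · exact le_max_of_le_left ((mul_le_mul_of_nonpos_right hs.1 h).trans (mul_le a))

theorem abs_mul_sub_mul_le {R : Type*} [CommRing R] [LinearOrder R] [IsOrderedRing R]
    (s t s' t' : R) :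
    |s * t - s' * t'| ≤ |s| * |t - t'| + |t'| * |s - s'| := by
  rw [← abs_mul, ← abs_mul, show s * t - s' * t' = s * (t - t') + t' * (s - s') by ring]
  exact abs_add_le _ _

section Boundedness

variable {n : ℕ} {Om : Set (Pt n)} {f g : Pt n → ℝ} {x : Pt n}

theorem LocBddOn.exists_eventually_abs_le (hf : LocBddOn Om Om f) (hx : x ∈ Om) :
    ∃ C, ∀ᶠ y in 𝓝[Om] x, |f y| ≤ C := by
  obtain ⟨δ, hδ, C, hC⟩ := hf x hx
  refine ⟨C, Metric.mem_nhdsWithin_iff.2 ⟨δ, hδ, fun y hy => ?_⟩⟩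
  exact (hC y hy.2 (mem_ball_iff_norm.1 hy.1) hy.2).le

namespace BddOnBounded

theorem locBddOn (hf : BddOnBounded Om f) : LocBddOn Om Om f := by
  intro x _
  obtain ⟨C, hC⟩ := hf (Om ∩ Metric.ball x 1) inter_subset_left
    (Metric.isBounded_ball.subset inter_subset_right)
  exact ⟨1, one_pos, C + 1, fun y hy hyx _ =>
    lt_add_of_le_of_pos (hC y ⟨hy, mem_ball_iff_norm.2 hyx⟩) one_pos⟩

theorem neg (hf : BddOnBounded Om f) : BddOnBounded Om (-f) := by
  simpa only [BddOnBounded, Pi.neg_apply, abs_neg] using hf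

theorem of_le_of_le {p : Pt n → ℝ} (hf : BddOnBounded Om f) (hg : BddOnBounded Om g)
    (hfp : ∀ y ∈ Om, f y ≤ p y) (hpg : ∀ y ∈ Om, p y ≤ g y) : BddOnBounded Om p := by
  intro s hs hb
  obtain ⟨C, hC⟩ := hf s hs hb
  obtain ⟨C', hC'⟩ := hg s hs hb
  exact ⟨max C C', fun y hy => (abs_le_max_abs_abs (hfp y (hs hy)) (hpg y (hs hy))).trans
    (max_le_max (hC y hy) (hC' y hy))⟩

theorem mul (hf : BddOnBounded Om f) (hg : BddOnBounded Om g) :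
    BddOnBounded Om fun y => f y * g y := by
  intro s hs hb
  obtain ⟨C, hC⟩ := hf s hs hb
  obtain ⟨C', hC'⟩ := hg s hs hb
  refine ⟨C * C', fun y hy => (abs_mul _ _).trans_le ?_⟩
  exact mul_le_mul (hC y hy) (hC' y hy) (abs_nonneg _) ((abs_nonneg _).trans (hC y hy))

theorem max (hf : BddOnBounded Om f) (hg : BddOnBounded Om g) :
    BddOnBounded Om fun y => max (f y) (g y) := by
  intro s hs hb
  obtain ⟨C, hC⟩ := hf s hs hb
  obtain ⟨C', hC'⟩ := hg s hs hb
  exact ⟨C ⊔ C', fun y hy => abs_max_le_max_abs_abs.trans (max_le_max (hC y hy) (hC' y hy))⟩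

theorem bddBelow_image_ball (hf : BddOnBounded Om f) (x : Pt n) (δ : ℝ) :
    BddBelow (f '' {y | y ∈ Om ∧ ‖y - x‖ < δ ∧ y ∈ Om}) := by
  obtain ⟨C, hC⟩ := hf {y | y ∈ Om ∧ ‖y - x‖ < δ ∧ y ∈ Om} (fun y hy => hy.1)
    (Metric.isBounded_ball.subset fun y hy => mem_ball_iff_norm.2 hy.2.1)
  exact ⟨-C, forall_mem_image.2 fun y hy => (abs_le.1 (hC y hy)).1⟩

end BddOnBounded

end Boundedness

section BaireOperators

variable {n : ℕ} {Om : Set (Pt n)} {f g : Pt n → ℝ} {x : Pt n} {c : ℝ}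

theorem Shigh_eq_neg_Ilow_neg (D Om : Set (Pt n)) (f : Pt n → ℝ) :
    Shigh D Om f = -Ilow D Om (-f) := by
  funext x
  have sSup_image (s : Set (Pt n)) : sSup (f '' s) = -sInf ((-f) '' s) := by
    rw [Real.sInf_def, neg_neg, ← image_neg_eq_neg, image_image]
    simp only [Pi.neg_apply, neg_neg]
  rw [Pi.neg_apply, Shigh, Ilow, Real.sInf_def]
  congr 2
  ext a
  simp only [Set.mem_neg, mem_ofPred_eq, sSup_image, neg_inj]

theorem eventually_lt_of_lt_Ilow (hf : BddOnBounded Om f) (hc : c < Ilow Om Om f x) :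
    ∀ᶠ y in 𝓝[Om] x, c < f y := by
  obtain ⟨_, ⟨δ, hδ, rfl⟩, hcδ⟩ := exists_lt_of_lt_csSup (by exact ⟨_, 1, one_pos, rfl⟩) hc
  refine Metric.mem_nhdsWithin_iff.2 ⟨δ, hδ, fun y hy => hcδ.trans_le ?_⟩
  exact csInf_le (hf.bddBelow_image_ball x δ)
    (mem_image_of_mem f ⟨hy.2, mem_ball_iff_norm.1 hy.1, hy.2⟩)

theorem le_Ilow_of_eventually_le (hf : BddOnBounded Om f) (hx : x ∈ Om)
    (hc : ∀ᶠ y in 𝓝[Om] x, c ≤ f y) : c ≤ Ilow Om Om f x := by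
  have mem_ball {δ : ℝ} (hδ : 0 < δ) : x ∈ {y | y ∈ Om ∧ ‖y - x‖ < δ ∧ y ∈ Om} :=
    ⟨hx, by rwa [sub_self, norm_zero], hx⟩
  obtain ⟨δ, hδ, hball⟩ := Metric.mem_nhdsWithin_iff.1 hc
  have le_sInf : c ≤ sInf (f '' {y | y ∈ Om ∧ ‖y - x‖ < δ ∧ y ∈ Om}) :=
    le_csInf ⟨_, mem_image_of_mem f (mem_ball hδ)⟩
      (forall_mem_image.2 fun y hy => hball ⟨mem_ball_iff_norm.2 hy.2.1, hy.1⟩)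
  refine le_sInf.trans (le_csSup ⟨f x, ?_⟩ ⟨δ, hδ, rfl⟩)
  rintro _ ⟨ε, hε, rfl⟩
  exact csInf_le (hf.bddBelow_image_ball x ε) (mem_image_of_mem f (mem_ball hε))

theorem Ilow_le_self (hf : BddOnBounded Om f) (hx : x ∈ Om) : Ilow Om Om f x ≤ f x :=
  le_of_forall_lt fun _ hc => (eventually_lt_of_lt_Ilow hf hc).self_of_nhdsWithin hx

theorem lowerSemicontinuousOn_Ilow (hf : BddOnBounded Om f) :
    LowerSemicontinuousOn (Ilow Om Om f) Om := by
  intro x _ c hc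
  obtain ⟨d, hcd, hd⟩ := exists_between hc
  filter_upwards [eventually_eventually_nhdsWithin.2 (eventually_lt_of_lt_Ilow hf hd),
    self_mem_nhdsWithin] with y hy hyOm
  exact hcd.trans_le (le_Ilow_of_eventually_le hf hyOm (hy.mono fun _ => le_of_lt))

theorem le_Ilow_of_lowerSemicontinuousOn (hf : BddOnBounded Om f)
    (hg : LowerSemicontinuousOn g Om) (hgf : ∀ y ∈ Om, g y ≤ f y) (hx : x ∈ Om) :
    g x ≤ Ilow Om Om f x := by
  refine le_of_forall_lt_imp_le_of_dense fun c hc => le_Ilow_of_eventually_le hf hx ?_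
  filter_upwards [hg x hx c hc, self_mem_nhdsWithin] with y hy hyOm
  exact hy.le.trans (hgf y hyOm)

theorem Ilow_mono (hf : BddOnBounded Om f) (hg : BddOnBounded Om g)
    (hfg : ∀ y ∈ Om, f y ≤ g y) (hx : x ∈ Om) : Ilow Om Om f x ≤ Ilow Om Om g x :=
  le_Ilow_of_lowerSemicontinuousOn hg (lowerSemicontinuousOn_Ilow hf)
    (fun y hy => (Ilow_le_self hf hy).trans (hfg y hy)) hx

theorem eventually_lt_of_Shigh_lt (hf : BddOnBounded Om f) (hc : Shigh Om Om f x < c) :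
    ∀ᶠ y in 𝓝[Om] x, f y < c := by
  rw [Shigh_eq_neg_Ilow_neg, Pi.neg_apply, neg_lt] at hc
  exact (eventually_lt_of_lt_Ilow hf.neg hc).mono fun _ => neg_lt_neg_iff.1

theorem frequently_lt_of_lt_Shigh (hf : BddOnBounded Om f) (hx : x ∈ Om)
    (hc : c < Shigh Om Om f x) : ∃ᶠ y in 𝓝[Om] x, c < f y := by
  contrapose! hc
  rw [Shigh_eq_neg_Ilow_neg, Pi.neg_apply, neg_le]
  refine le_Ilow_of_eventually_le hf.neg hx ?_
  exact hc.mono fun _ => neg_le_neg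

theorem le_Shigh_self (hf : BddOnBounded Om f) (hx : x ∈ Om) : f x ≤ Shigh Om Om f x := by
  rw [Shigh_eq_neg_Ilow_neg, Pi.neg_apply, le_neg]
  exact Ilow_le_self hf.neg hx

theorem upperSemicontinuousOn_Shigh (hf : BddOnBounded Om f) :
    UpperSemicontinuousOn (Shigh Om Om f) Om := by
  rw [Shigh_eq_neg_Ilow_neg]
  exact continuous_neg.comp_lowerSemicontinuousOn_antitone (lowerSemicontinuousOn_Ilow hf.neg)
    fun _ _ => neg_le_neg

theorem Shigh_le_of_upperSemicontinuousOn (hf : BddOnBounded Om f)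
    (hg : UpperSemicontinuousOn g Om) (hfg : ∀ y ∈ Om, f y ≤ g y) (hx : x ∈ Om) :
    Shigh Om Om f x ≤ g x := by
  rw [Shigh_eq_neg_Ilow_neg, Pi.neg_apply, neg_le]
  exact le_Ilow_of_lowerSemicontinuousOn hf.neg
    (continuous_neg.comp_upperSemicontinuousOn_antitone hg fun _ _ => neg_le_neg)
    (fun y hy => neg_le_neg (hfg y hy)) hx

theorem Shigh_mono (hf : BddOnBounded Om f) (hg : BddOnBounded Om g)
    (hfg : ∀ y ∈ Om, f y ≤ g y) (hx : x ∈ Om) : Shigh Om Om f x ≤ Shigh Om Om g x :=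
  Shigh_le_of_upperSemicontinuousOn hf (upperSemicontinuousOn_Shigh hg)
    (fun y hy => (hfg y hy).trans (le_Shigh_self hg hy)) hx

theorem Ilow_nonneg_of_not_bddBelow {s : Set (Pt n)} (hs : s ⊆ Om) (hb : IsBounded s)
    (hf : ¬BddBelow (f '' s)) (x : Pt n) : 0 ≤ Ilow Om Om f x := by
  obtain ⟨δ, hδ, hsδ⟩ := hb.subset_ball_lt 0 x
  refine Real.sSup_nonneg' ⟨0, ⟨δ, hδ, (Real.sInf_of_not_bddBelow ?_).symm⟩, le_rfl⟩
  refine mt (fun h => h.mono (image_mono fun y hy => ?_)) hf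
  exact ⟨hs hy, mem_ball_iff_norm.1 (hsδ hy), hs hy⟩

-- If `f` were unbounded below on a bounded set, the junk value of `sInf` would force
-- `0 ≤ Ilow Om Om f = f` everywhere.
theorem bddBelow_image_of_Ilow_eq (h : ∀ x ∈ Om, Ilow Om Om f x = f x) {s : Set (Pt n)}
    (hs : s ⊆ Om) (hb : IsBounded s) : BddBelow (f '' s) := by
  by_contra hf
  refine hf ⟨0, forall_mem_image.2 fun y hy => ?_⟩
  exact (Ilow_nonneg_of_not_bddBelow hs hb hf y).trans_eq (h y (hs hy))

theorem bddAbove_image_of_Shigh_eq (h : ∀ x ∈ Om, Shigh Om Om f x = f x) {s : Set (Pt n)}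
    (hs : s ⊆ Om) (hb : IsBounded s) : BddAbove (f '' s) := by
  have Ilow_neg_eq : ∀ x ∈ Om, Ilow Om Om (-f) x = (-f) x := fun x hx => by
    rw [Pi.neg_apply, ← h x hx, Shigh_eq_neg_Ilow_neg, Pi.neg_apply, neg_neg]
  obtain ⟨C, hC⟩ := bddBelow_image_of_Ilow_eq Ilow_neg_eq hs hb
  exact ⟨-C, forall_mem_image.2 fun y hy => le_neg.1 (hC (mem_image_of_mem _ hy))⟩

end BaireOperators

section HContPairs

variable {n : ℕ} {Om : Set (Pt n)} {f g u v : Pt n → ℝ} {x : Pt n}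

theorem HContPair.sCont (h : HContPair Om u v) : SCont Om u v :=
  h.2 u v h.1.1 h.1.2.1 fun x hx => ⟨le_rfl, h.1.2.2 x hx, le_rfl⟩

theorem HContPair.bddOnBounded (h : HContPair Om u v) :
    BddOnBounded Om u ∧ BddOnBounded Om v := by
  have bound (s) (hs : s ⊆ Om) (hb : IsBounded s) :
      ∃ C, ∀ y ∈ s, |u y| ≤ C ∧ |v y| ≤ C := by
    obtain ⟨a, ha⟩ := bddBelow_image_of_Ilow_eq (fun x hx => (h.sCont x hx).1) hs hb
    obtain ⟨b, hb⟩ := bddAbove_image_of_Shigh_eq (fun x hx => (h.sCont x hx).2) hs hb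
    refine ⟨max |a| |b|, fun y hy => ?_⟩
    have hau : a ≤ u y := ha (mem_image_of_mem u hy)
    have hvb : v y ≤ b := hb (mem_image_of_mem v hy)
    have huv : u y ≤ v y := h.1.2.2 y (hs hy)
    exact ⟨abs_le_max_abs_abs hau (huv.trans hvb), abs_le_max_abs_abs (hau.trans huv) hvb⟩
  exact ⟨fun s hs hb => (bound s hs hb).imp fun _ hC y hy => (hC y hy).1,
    fun s hs hb => (bound s hs hb).imp fun _ hC y hy => (hC y hy).2⟩

theorem HContPair.lowerSemicontinuousOn (h : HContPair Om u v) : LowerSemicontinuousOn u Om :=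
  fun x hx _ hc => eventually_lt_of_lt_Ilow h.bddOnBounded.1 (hc.trans_eq (h.sCont x hx).1.symm)

theorem HContPair.upperSemicontinuousOn (h : HContPair Om u v) : UpperSemicontinuousOn v Om :=
  fun x hx _ hc => eventually_lt_of_Shigh_lt h.bddOnBounded.2 ((h.sCont x hx).2.trans_lt hc)

theorem hContPair_iff : HContPair Om u v ↔ BddOnBounded Om u ∧ BddOnBounded Om v ∧
    ∀ x ∈ Om, Ilow Om Om v x = u x ∧ Shigh Om Om u x = v x := by
  constructor
  · intro h
    refine ⟨h.bddOnBounded.1, h.bddOnBounded.2, fun x hx => ?_⟩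
    obtain ⟨⟨hu, hv, huv⟩, hH⟩ := h
    exact ⟨(hH v v hv hv (fun y hy => ⟨huv y hy, le_rfl, le_rfl⟩) x hx).1,
      (hH u u hu hu (fun y hy => ⟨le_rfl, le_rfl, huv y hy⟩) x hx).2⟩
  · rintro ⟨hu, hv, h⟩
    refine ⟨⟨hu.locBddOn, hv.locBddOn, fun x hx => ?_⟩, fun p q _ _ hpq x hx => ?_⟩
    · exact (h x hx).1.symm.trans_le (Ilow_le_self hv hx)
    have hup (y) (hy : y ∈ Om) : u y ≤ p y := (hpq y hy).1
    have hpv (y) (hy : y ∈ Om) : p y ≤ v y := (hpq y hy).2.1.trans (hpq y hy).2.2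
    have huq (y) (hy : y ∈ Om) : u y ≤ q y := (hpq y hy).1.trans (hpq y hy).2.1
    have hqv (y) (hy : y ∈ Om) : q y ≤ v y := (hpq y hy).2.2
    have hp : BddOnBounded Om p := hu.of_le_of_le hv hup hpv
    have hq : BddOnBounded Om q := hu.of_le_of_le hv huq hqv
    rw [← (h x hx).1, ← (h x hx).2]
    refine ⟨(Ilow_mono hp hv hpv hx).antisymm ?_, le_antisymm ?_ (Shigh_mono hu hq huq hx)⟩
    · exact le_Ilow_of_lowerSemicontinuousOn hp (lowerSemicontinuousOn_Ilow hv)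
        (fun y hy => (h y hy).1.trans_le (hup y hy)) hx
    · exact Shigh_le_of_upperSemicontinuousOn hq (upperSemicontinuousOn_Shigh hu)
        (fun y hy => (hqv y hy).trans_eq (h y hy).2.symm) hx

-- Arbitrarily close to `x` the lower endpoint exceeds `v x - ε / 2`, while `v` stays below
-- `v x + ε / 2`; both are open conditions.
theorem HContPair.frequently_eventually_sub_lt (h : HContPair Om u v) (hx : x ∈ Om) {ε : ℝ}
    (hε : 0 < ε) : ∃ᶠ y in 𝓝[Om] x, ∀ᶠ z in 𝓝[Om] y, v z - u z < ε := by
  obtain ⟨hu, -, hI⟩ := hContPair_iff.1 h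
  have u_large : ∃ᶠ y in 𝓝[Om] x, v x - ε / 2 < u y :=
    frequently_lt_of_lt_Shigh hu hx ((sub_lt_self _ (half_pos hε)).trans_eq (hI x hx).2.symm)
  have v_small : ∀ᶠ y in 𝓝[Om] x, ∀ᶠ z in 𝓝[Om] y, v z < v x + ε / 2 :=
    eventually_eventually_nhdsWithin.2
      (h.upperSemicontinuousOn x hx _ (lt_add_of_pos_right _ (half_pos hε)))
  refine (u_large.and_eventually (v_small.and self_mem_nhdsWithin)).mono ?_
  rintro y ⟨huy, hvy, hy⟩
  filter_upwards [hvy, h.lowerSemicontinuousOn y hy _ huy] with z hvz huz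
  linarith

theorem HContPair.exists_eventually_abs_le (h : HContPair Om u v) (hx : x ∈ Om) :
    ∃ C, ∀ᶠ y in 𝓝[Om] x, ∀ s ∈ Icc (u y) (v y), |s| ≤ C := by
  obtain ⟨A, hA⟩ := h.1.1.exists_eventually_abs_le hx
  obtain ⟨B, hB⟩ := h.1.2.1.exists_eventually_abs_le hx
  refine ⟨max A B, ?_⟩
  filter_upwards [hA, hB] with y hAy hBy s hs
  exact (abs_le_max_abs_abs hs.1 hs.2).trans (max_le_max hAy hBy)

theorem hContPair_Ilow_Shigh_Ilow (hf : BddOnBounded Om f) (hg : BddOnBounded Om g)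
    (hf_lsc : LowerSemicontinuousOn f Om) (hg_usc : UpperSemicontinuousOn g Om)
    (hfg : ∀ x ∈ Om, f x ≤ g x) :
    HContPair Om (Ilow Om Om g) (Shigh Om Om (Ilow Om Om g)) ∧ ∀ x ∈ Om, f x ≤ Ilow Om Om g x ∧
      Ilow Om Om g x ≤ Shigh Om Om (Ilow Om Om g) x ∧ Shigh Om Om (Ilow Om Om g) x ≤ g x := by
  have f_le (x) (hx : x ∈ Om) : f x ≤ Ilow Om Om g x :=
    le_Ilow_of_lowerSemicontinuousOn hg hf_lsc hfg hx
  have hI : BddOnBounded Om (Ilow Om Om g) := hf.of_le_of_le hg f_le fun _ => Ilow_le_self hg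
  have I_le_S (x) (hx : x ∈ Om) : Ilow Om Om g x ≤ Shigh Om Om (Ilow Om Om g) x :=
    le_Shigh_self hI hx
  have S_le (x) (hx : x ∈ Om) : Shigh Om Om (Ilow Om Om g) x ≤ g x :=
    Shigh_le_of_upperSemicontinuousOn hI hg_usc (fun _ => Ilow_le_self hg) hx
  have hS : BddOnBounded Om (Shigh Om Om (Ilow Om Om g)) := hI.of_le_of_le hg I_le_S S_le
  refine ⟨hContPair_iff.2 ⟨hI, hS, fun x hx => ⟨(Ilow_mono hS hg S_le hx).antisymm ?_, rfl⟩⟩,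
    fun x hx => ⟨f_le x hx, I_le_S x hx, S_le x hx⟩⟩
  exact le_Ilow_of_lowerSemicontinuousOn hS (lowerSemicontinuousOn_Ilow hg) I_le_S hx

theorem HContPair.eq_Ilow_Shigh_Ilow (h : HContPair Om u v) (hf : BddOnBounded Om f)
    (hg : BddOnBounded Om g) (hI_le_S : ∀ x ∈ Om, Ilow Om Om g x ≤ Shigh Om Om f x)
    (hfu : ∀ x ∈ Om, f x ≤ u x) (hvg : ∀ x ∈ Om, v x ≤ g x) (hx : x ∈ Om) :
    u x = Ilow Om Om g x ∧ v x = Shigh Om Om (Ilow Om Om g) x := by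
  obtain ⟨hu, hv, huv⟩ := hContPair_iff.1 h
  have u_le (y) (hy : y ∈ Om) : u y ≤ Ilow Om Om g y :=
    (huv y hy).1.symm.trans_le (Ilow_mono hv hg hvg hy)
  have le_v (y) (hy : y ∈ Om) : Ilow Om Om g y ≤ v y :=
    (hI_le_S y hy).trans ((Shigh_mono hf hu hfu hy).trans_eq (huv y hy).2)
  have hI : BddOnBounded Om (Ilow Om Om g) := hu.of_le_of_le hv u_le le_v
  refine ⟨(u_le x hx).antisymm ?_, le_antisymm ?_ ?_⟩
  · exact (le_Ilow_of_lowerSemicontinuousOn hv (lowerSemicontinuousOn_Ilow hg) le_v hx).trans_eq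
      (huv x hx).1
  · exact (huv x hx).2.symm.trans_le (Shigh_mono hu hI u_le hx)
  · exact Shigh_le_of_upperSemicontinuousOn hI h.upperSemicontinuousOn le_v hx

end HContPairs

section IntervalProduct

variable {n : ℕ} {Om : Set (Pt n)} {u₁ v₁ u₂ v₂ : Pt n → ℝ} {x : Pt n}

theorem exists_imax_eq_mul (h₁ : u₁ x ≤ v₁ x) (h₂ : u₂ x ≤ v₂ x) :
    ∃ s ∈ Icc (u₁ x) (v₁ x), ∃ t ∈ Icc (u₂ x) (v₂ x), imax u₁ v₁ u₂ v₂ x = s * t := by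
  have exists_max (s : ℝ) : ∃ t ∈ Icc (u₂ x) (v₂ x), max (s * u₂ x) (s * v₂ x) = s * t :=
    (max_choice (s * u₂ x) (s * v₂ x)).elim (fun h => ⟨_, left_mem_Icc.2 h₂, h⟩)
      fun h => ⟨_, right_mem_Icc.2 h₂, h⟩
  obtain ⟨t, ht, hut⟩ := exists_max (u₁ x)
  obtain ⟨t', ht', hvt⟩ := exists_max (v₁ x)
  rw [imax, hut, hvt]
  exact (max_choice (u₁ x * t) (v₁ x * t')).elim (fun h => ⟨_, left_mem_Icc.2 h₁, t, ht, h⟩)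
    fun h => ⟨_, right_mem_Icc.2 h₁, t', ht', h⟩

theorem imin_eq_neg_imax : imin u₁ v₁ u₂ v₂ = -imax (-v₁) (-u₁) u₂ v₂ := by
  funext x
  simp only [imin, imax, Pi.neg_apply, neg_mul, max_neg_neg, neg_neg]
  exact min_comm _ _

theorem exists_imin_eq_mul (h₁ : u₁ x ≤ v₁ x) (h₂ : u₂ x ≤ v₂ x) :
    ∃ s ∈ Icc (u₁ x) (v₁ x), ∃ t ∈ Icc (u₂ x) (v₂ x), imin u₁ v₁ u₂ v₂ x = s * t := by
  obtain ⟨s, hs, t, ht, hst⟩ :=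
    exists_imax_eq_mul (u₁ := -v₁) (v₁ := -u₁) (neg_le_neg h₁) h₂
  refine ⟨-s, ⟨le_neg.1 hs.2, neg_le.1 hs.1⟩, t, ht, ?_⟩
  rw [imin_eq_neg_imax, Pi.neg_apply, hst, neg_mul]

theorem imin_le_imax (u₁ v₁ u₂ v₂ : Pt n → ℝ) (x : Pt n) :
    imin u₁ v₁ u₂ v₂ x ≤ imax u₁ v₁ u₂ v₂ x :=
  min_le_of_left_le (min_le_left _ _) |>.trans (le_max_of_le_left (le_max_left _ _))

theorem imax_sub_imin_le {C₁ C₂ : ℝ} (h₁ : u₁ x ≤ v₁ x) (h₂ : u₂ x ≤ v₂ x)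
    (hC₁ : ∀ s ∈ Icc (u₁ x) (v₁ x), |s| ≤ C₁) (hC₂ : ∀ t ∈ Icc (u₂ x) (v₂ x), |t| ≤ C₂) :
    imax u₁ v₁ u₂ v₂ x - imin u₁ v₁ u₂ v₂ x ≤ C₁ * (v₂ x - u₂ x) + C₂ * (v₁ x - u₁ x) := by
  obtain ⟨s, hs, t, ht, hmax⟩ := exists_imax_eq_mul h₁ h₂
  obtain ⟨s', hs', t', ht', hmin⟩ := exists_imin_eq_mul h₁ h₂
  rw [hmax, hmin]
  calc s * t - s' * t' ≤ |s| * |t - t'| + |t'| * |s - s'| :=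
        (le_abs_self _).trans (abs_mul_sub_mul_le s t s' t')
    _ ≤ C₁ * (v₂ x - u₂ x) + C₂ * (v₁ x - u₁ x) :=
        add_le_add
          (mul_le_mul (hC₁ s hs) (abs_sub_le_of_le_of_le ht.1 ht.2 ht'.1 ht'.2) (abs_nonneg _)
            ((abs_nonneg s).trans (hC₁ s hs)))
          (mul_le_mul (hC₂ t' ht') (abs_sub_le_of_le_of_le hs.1 hs.2 hs'.1 hs'.2) (abs_nonneg _)
            ((abs_nonneg t').trans (hC₂ t' ht')))

theorem BddOnBounded.imax (hu₁ : BddOnBounded Om u₁) (hv₁ : BddOnBounded Om v₁)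
    (hu₂ : BddOnBounded Om u₂) (hv₂ : BddOnBounded Om v₂) :
    BddOnBounded Om (imax u₁ v₁ u₂ v₂) :=
  ((hu₁.mul hu₂).max (hu₁.mul hv₂)).max ((hv₁.mul hu₂).max (hv₁.mul hv₂))

theorem BddOnBounded.imin (hu₁ : BddOnBounded Om u₁) (hv₁ : BddOnBounded Om v₁)
    (hu₂ : BddOnBounded Om u₂) (hv₂ : BddOnBounded Om v₂) :
    BddOnBounded Om (imin u₁ v₁ u₂ v₂) := by
  rw [imin_eq_neg_imax]
  exact (hv₁.neg.imax hu₁.neg hu₂ hv₂).neg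

-- If `imax u₁ v₁ u₂ v₂ x < c`, the upper product endpoint of the slightly enlarged intervals at `x`
-- is still below `c`, and nearby intervals are contained in the enlarged ones.
theorem upperSemicontinuousOn_imax (hu₁ : LowerSemicontinuousOn u₁ Om)
    (hv₁ : UpperSemicontinuousOn v₁ Om) (hu₂ : LowerSemicontinuousOn u₂ Om)
    (hv₂ : UpperSemicontinuousOn v₂ Om) (h₁ : ∀ x ∈ Om, u₁ x ≤ v₁ x)
    (h₂ : ∀ x ∈ Om, u₂ x ≤ v₂ x) : UpperSemicontinuousOn (imax u₁ v₁ u₂ v₂) Om := by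
  intro x hx c hc
  let enlarged (ε : ℝ) : ℝ :=
    max (max ((u₁ x - ε) * (u₂ x - ε)) ((u₁ x - ε) * (v₂ x + ε)))
      (max ((v₁ x + ε) * (u₂ x - ε)) ((v₁ x + ε) * (v₂ x + ε)))
  have enlarged_zero : enlarged 0 = imax u₁ v₁ u₂ v₂ x := by
    simp only [enlarged, imax, sub_zero, add_zero]
  have enlarged_cont : Continuous enlarged := by fun_prop
  have enlarged_lt : ∀ᶠ ε in 𝓝[>] 0, enlarged ε < c :=
    (enlarged_cont.tendsto 0).eventually_lt_const (enlarged_zero.trans_lt hc)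
      |>.filter_mono nhdsWithin_le_nhds
  obtain ⟨ε, hεc, hε⟩ := (enlarged_lt.and self_mem_nhdsWithin).exists
  filter_upwards [hu₁ x hx _ (sub_lt_self _ hε), hv₁ x hx _ (lt_add_of_pos_right _ hε),
    hu₂ x hx _ (sub_lt_self _ hε), hv₂ x hx _ (lt_add_of_pos_right _ hε),
    self_mem_nhdsWithin] with y hu₁y hv₁y hu₂y hv₂y hy
  obtain ⟨s, hs, t, ht, hst⟩ := exists_imax_eq_mul (h₁ y hy) (h₂ y hy)
  rw [hst]
  exact (mul_le_max_of_mem_Icc (Icc_subset_Icc hu₁y.le hv₁y.le hs)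
    (Icc_subset_Icc hu₂y.le hv₂y.le ht)).trans_lt hεc

theorem lowerSemicontinuousOn_imin (hu₁ : LowerSemicontinuousOn u₁ Om)
    (hv₁ : UpperSemicontinuousOn v₁ Om) (hu₂ : LowerSemicontinuousOn u₂ Om)
    (hv₂ : UpperSemicontinuousOn v₂ Om) (h₁ : ∀ x ∈ Om, u₁ x ≤ v₁ x)
    (h₂ : ∀ x ∈ Om, u₂ x ≤ v₂ x) : LowerSemicontinuousOn (imin u₁ v₁ u₂ v₂) Om := by
  rw [imin_eq_neg_imax]
  refine continuous_neg.comp_upperSemicontinuousOn_antitone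
    (upperSemicontinuousOn_imax ?_ ?_ hu₂ hv₂ (fun x hx => neg_le_neg (h₁ x hx)) h₂)
    fun _ _ => neg_le_neg
  · exact continuous_neg.comp_upperSemicontinuousOn_antitone hv₁ fun _ _ => neg_le_neg
  · exact continuous_neg.comp_lowerSemicontinuousOn_antitone hu₁ fun _ _ => neg_le_neg

theorem frequently_imax_sub_imin_lt (h₁ : HContPair Om u₁ v₁) (h₂ : HContPair Om u₂ v₂)
    (hx : x ∈ Om) {η : ℝ} (hη : 0 < η) :
    ∃ᶠ y in 𝓝[Om] x, imax u₁ v₁ u₂ v₂ y - imin u₁ v₁ u₂ v₂ y < η := by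
  obtain ⟨C₁, hC₁⟩ := h₁.exists_eventually_abs_le hx
  obtain ⟨C₂, hC₂⟩ := h₂.exists_eventually_abs_le hx
  obtain ⟨ε, hε, hεη⟩ := exists_pos_mul_lt hη (C₁ + C₂)
  have gaps_small : ∃ᶠ y in 𝓝[Om] x, v₁ y - u₁ y < ε ∧ v₂ y - u₂ y < ε := by
    have gap₁ := (h₁.frequently_eventually_sub_lt hx hε).and_eventually self_mem_nhdsWithin
    refine frequently_frequently_nhdsWithin.1 (gap₁.mono fun y ⟨gap₁_y, hy⟩ => ?_)
    have gap₂ : ∃ᶠ z in 𝓝[Om] y, v₂ z - u₂ z < ε :=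
      ((h₂.frequently_eventually_sub_lt hy hε).and_eventually self_mem_nhdsWithin).mono
        fun _ ⟨hz, hz_mem⟩ => hz.self_of_nhdsWithin hz_mem
    exact (gap₂.and_eventually gap₁_y).mono fun _ => And.symm
  refine (gaps_small.and_eventually (hC₁.and (hC₂.and self_mem_nhdsWithin))).mono ?_
  rintro y ⟨⟨gap₁, gap₂⟩, hC₁y, hC₂y, hy⟩
  have huv₁ : u₁ y ≤ v₁ y := h₁.1.2.2 y hy
  have huv₂ : u₂ y ≤ v₂ y := h₂.1.2.2 y hy
  have hC₁_nonneg : 0 ≤ C₁ := (abs_nonneg _).trans (hC₁y _ (left_mem_Icc.2 huv₁))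
  have hC₂_nonneg : 0 ≤ C₂ := (abs_nonneg _).trans (hC₂y _ (left_mem_Icc.2 huv₂))
  calc imax u₁ v₁ u₂ v₂ y - imin u₁ v₁ u₂ v₂ y
      ≤ C₁ * (v₂ y - u₂ y) + C₂ * (v₁ y - u₁ y) := imax_sub_imin_le huv₁ huv₂ hC₁y hC₂y
    _ ≤ C₁ * ε + C₂ * ε := by gcongr
    _ = (C₁ + C₂) * ε := (add_mul _ _ _).symm
    _ < η := hεη

theorem Ilow_imax_le_Shigh_imin (h₁ : HContPair Om u₁ v₁) (h₂ : HContPair Om u₂ v₂)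
    (hx : x ∈ Om) :
    Ilow Om Om (imax u₁ v₁ u₂ v₂) x ≤ Shigh Om Om (imin u₁ v₁ u₂ v₂) x := by
  obtain ⟨⟨hu₁, hv₁⟩, hu₂, hv₂⟩ := And.intro h₁.bddOnBounded h₂.bddOnBounded
  by_contra! hlt
  obtain ⟨b, hSb, hbI⟩ := exists_between hlt
  obtain ⟨a, hSa, hab⟩ := exists_between hSb
  have imax_large := eventually_lt_of_lt_Ilow (hu₁.imax hv₁ hu₂ hv₂) hbI
  have imin_small := eventually_lt_of_Shigh_lt (hu₁.imin hv₁ hu₂ hv₂) hSa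
  obtain ⟨y, hgap, hmax, hmin⟩ := ((frequently_imax_sub_imin_lt h₁ h₂ hx
    (sub_pos.2 hab)).and_eventually (imax_large.and imin_small)).exists
  linarith

end IntervalProduct

theorem stmt8_general {n : ℕ} (Om : Set (Pt n)) (u₁ v₁ u₂ v₂ : Pt n → ℝ)
    (h₁ : HContPair Om u₁ v₁) (h₂ : HContPair Om u₂ v₂) :
    ∃ ql qu : Pt n → ℝ,
      (HContPair Om ql qu ∧
        ∀ x ∈ Om, imin u₁ v₁ u₂ v₂ x ≤ ql x ∧ ql x ≤ qu x ∧
          qu x ≤ imax u₁ v₁ u₂ v₂ x) ∧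
      ∀ rl ru : Pt n → ℝ, HContPair Om rl ru →
        (∀ x ∈ Om, imin u₁ v₁ u₂ v₂ x ≤ rl x ∧ rl x ≤ ru x ∧
          ru x ≤ imax u₁ v₁ u₂ v₂ x) →
        ∀ x ∈ Om, rl x = ql x ∧ ru x = qu x := by
  obtain ⟨⟨hu₁, hv₁⟩, hu₂, hv₂⟩ := And.intro h₁.bddOnBounded h₂.bddOnBounded
  have hmin : BddOnBounded Om (imin u₁ v₁ u₂ v₂) := hu₁.imin hv₁ hu₂ hv₂
  have hmax : BddOnBounded Om (imax u₁ v₁ u₂ v₂) := hu₁.imax hv₁ hu₂ hv₂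
  have hmin_lsc : LowerSemicontinuousOn (imin u₁ v₁ u₂ v₂) Om :=
    lowerSemicontinuousOn_imin h₁.lowerSemicontinuousOn h₁.upperSemicontinuousOn
      h₂.lowerSemicontinuousOn h₂.upperSemicontinuousOn h₁.1.2.2 h₂.1.2.2
  have hmax_usc : UpperSemicontinuousOn (imax u₁ v₁ u₂ v₂) Om :=
    upperSemicontinuousOn_imax h₁.lowerSemicontinuousOn h₁.upperSemicontinuousOn
      h₂.lowerSemicontinuousOn h₂.upperSemicontinuousOn h₁.1.2.2 h₂.1.2.2
  refine ⟨_, _, hContPair_Ilow_Shigh_Ilow hmin hmax hmin_lsc hmax_usc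
    fun x _ => imin_le_imax u₁ v₁ u₂ v₂ x, fun rl ru hr hbetween x hx => ?_⟩
  exact hr.eq_Ilow_Shigh_Ilow hmin hmax (fun y hy => Ilow_imax_le_Shigh_imin h₁ h₂ hy)
    (fun y hy => (hbetween y hy).1) (fun y hy => (hbetween y hy).2.2) hx

theorem stmt8 {n : ℕ} (Om : Set (Pt n)) (hOm : IsOpen Om)
    (u₁ v₁ u₂ v₂ : Pt n → ℝ)
    (h₁ : HContPair Om u₁ v₁) (h₂ : HContPair Om u₂ v₂) :
    ∃ ql qu : Pt n → ℝ,
      (HContPair Om ql qu ∧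
        ∀ x ∈ Om, imin u₁ v₁ u₂ v₂ x ≤ ql x ∧ ql x ≤ qu x ∧
          qu x ≤ imax u₁ v₁ u₂ v₂ x) ∧
      ∀ rl ru : Pt n → ℝ, HContPair Om rl ru →
        (∀ x ∈ Om, imin u₁ v₁ u₂ v₂ x ≤ rl x ∧ rl x ≤ ru x ∧
          ru x ≤ imax u₁ v₁ u₂ v₂ x) →
        ∀ x ∈ Om, rl x = ql x ∧ ru x = qu x :=
  stmt8_general Om u₁ v₁ u₂ v₂ h₁ h₂
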